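/- arXiv:2602.20625 — 2 statements merged into one kernel-verified Lean document; each statement's English description precedes it below -/
import Mathlib

section
/- Let k ≥ 1 be a fixed integer and set δ = 1 if k is odd and δ = 2 if k is even. For n ≥ 0 define T_k(n) = Σ_{m∈P(n)} B(m), the total number of occurrences of parts in Ev_{>k} among all compositions of n. Then in ℤ[[x]]: (1 − 2x)²·(1 + x) · Σ_{n≥0} T_k(n)·x^n = x^{k+δ}·(1 − x); equivalently, (1 − 2x)²·(1 − x²) · Σ_{n≥0} T_k(n)·x^n = x^{k+δ}·(1 − x)². -/
open PowerSeries

/-- The number of parts of a composition that are even and strictly greater than `k`. -/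
def Bstat (k : ℕ) {n : ℕ} (m : Composition n) : ℕ :=
  m.blocks.countP fun j => decide (Even j ∧ k < j)

/-- `Tk k n` is the total number of occurrences of even parts strictly greater
than `k` among all compositions of `n`. -/
def Tk (k n : ℕ) : ℕ := ∑ m : Composition n, Bstat k m

/-!
Give every part `j` a weight `w j` and let `T`, `C`, `E` be the generating functions of the total
weight of all compositions of `n`, of the number of compositions of `n`, and of the weights
`w 1, w 2, …`. Splitting off the first part of a composition gives
`T = E * C + X / (1 - X) * T`, and `C = (1 - X) / (1 - 2 * X)`, so
`(1 - 2 * X) ^ 2 * T = (1 - X) ^ 2 * E`. For the indicator weight of the even numbers exceeding `k`,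
the series `E` is geometric with ratio `X ^ 2` and first term `X ^ (k + δ)`.
-/

section FirstPart

open Finset.HasAntidiagonal (antidiagonal mem_antidiagonal)

variable {n : ℕ}

/-- The composition of `n + 1` with first part `a + 1` and remaining parts a composition of `b`,
where `a + b = n`. The first part is shifted by one so that `(a, b)` ranges over the whole
antidiagonal. -/
def consComposition (c : Σ p : antidiagonal n, Composition p.1.2) :
    Composition (n + 1) where
  blocks := (c.1.1.1 + 1) :: c.2.blocks
  blocks_pos {i} hi := by
    rcases List.mem_cons.1 hi with rfl | hi
    · exact Nat.succ_pos _
    · exact c.2.blocks_pos hi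
  blocks_sum := by
    have hadd := mem_antidiagonal.1 c.1.2
    rw [List.sum_cons, c.2.blocks_sum]
    omega

lemma consComposition_injective : Function.Injective (consComposition (n := n)) := by
  rintro ⟨⟨⟨a, b⟩, hab⟩, c⟩ ⟨⟨⟨a', b'⟩, hab'⟩, c'⟩ h
  obtain ⟨ha, hc⟩ := List.cons.inj (congrArg Composition.blocks h)
  obtain rfl : a = a' := Nat.succ.inj ha
  obtain ⟨rfl, hcc'⟩ := Sigma.mk.inj
    (Composition.sigma_eq_iff_blocks_eq (c := ⟨b, c⟩) (c' := ⟨b', c'⟩) |>.2 hc)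
  obtain rfl := eq_of_heq hcc'
  rfl

lemma consComposition_surjective : Function.Surjective (consComposition (n := n)) := by
  rintro ⟨_ | ⟨a, l⟩, hpos, hsum⟩
  · simp at hsum
  · obtain ⟨a, rfl⟩ := Nat.exists_eq_add_one.2 (hpos List.mem_cons_self)
    have hadd : (a, l.sum) ∈ antidiagonal n := by
      rw [List.sum_cons] at hsum
      rw [mem_antidiagonal]
      omega
    exact ⟨⟨⟨_, hadd⟩, ⟨l, fun hi => hpos (List.mem_cons_of_mem _ hi), rfl⟩⟩, rfl⟩

lemma sum_composition_succ {M : Type*} [AddCommMonoid M] (f : List ℕ → M) :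
    ∑ m : Composition (n + 1), f m.blocks
      = ∑ p ∈ antidiagonal n, ∑ m : Composition p.2, f ((p.1 + 1) :: m.blocks) := by
  have hbij : Function.Bijective (consComposition (n := n)) :=
    ⟨consComposition_injective, consComposition_surjective⟩
  rw [← hbij.sum_comp, Fintype.sum_sigma]
  exact Finset.sum_coe_sort (antidiagonal n)
    fun p => ∑ m : Composition p.2, f ((p.1 + 1) :: m.blocks)

end FirstPart

section GeneratingFunctions

variable {R : Type*} [CommRing R]

variable (R) in
/-- The generating function of the number of compositions of `n`. -/
noncomputable def compositionSeries : R⟦X⟧ :=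
  PowerSeries.mk fun n => (Fintype.card (Composition n) : R)

/-- The generating function `∑ j ≥ 1, w j * X ^ j` of the weights of a single part. -/
noncomputable def partWeightSeries (w : ℕ → R) : R⟦X⟧ :=
  X * PowerSeries.mk fun n => w (n + 1)

/-- The generating function of the total weight of the compositions of `n`, a composition being
weighted by the sum of the weights `w j` of its parts `j`. -/
noncomputable def totalWeightSeries (w : ℕ → R) : R⟦X⟧ :=
  PowerSeries.mk fun n => ∑ m : Composition n, (m.blocks.map w).sum

variable (R) in
lemma one_sub_two_mul_X_mul_compositionSeries :
    (1 - 2 * X) * compositionSeries R = 1 - X := by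
  rw [sub_mul, one_mul, mul_assoc, two_mul]
  ext (_ | _ | n)
  · simp [compositionSeries, composition_card]
  · simp [compositionSeries, composition_card, coeff_succ_X_mul, coeff_one, coeff_X]
  · simp [compositionSeries, composition_card, coeff_succ_X_mul, coeff_one, coeff_X, pow_succ,
      mul_two]

lemma totalWeightSeries_eq_partWeightSeries_mul_add (w : ℕ → R) :
    totalWeightSeries w = partWeightSeries w * compositionSeries R
      + X * (PowerSeries.mk 1 * totalWeightSeries w) := by
  rw [partWeightSeries, mul_assoc]
  ext (_ | n)
  · simp [totalWeightSeries, Composition.blocks_eq_nil _ |>.2 rfl]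
  · rw [map_add, coeff_succ_X_mul, coeff_succ_X_mul, coeff_mul, coeff_mul,
      ← Finset.sum_add_distrib, totalWeightSeries, coeff_mk,
      sum_composition_succ fun l => (l.map w).sum]
    simp [compositionSeries, Finset.sum_add_distrib, mul_comm]

theorem one_sub_two_mul_X_sq_mul_totalWeightSeries (w : ℕ → R) :
    (1 - 2 * X) ^ 2 * totalWeightSeries w = (1 - X) ^ 2 * partWeightSeries w := by
  have hgeom : (PowerSeries.mk 1 : R⟦X⟧) * (1 - X) = 1 := mk_one_mul_one_sub_eq_one R
  have hfactor : (1 - 2 * X) * totalWeightSeries w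
      = (1 - X) * partWeightSeries w * compositionSeries R := by
    linear_combination (1 - X) * totalWeightSeries_eq_partWeightSeries_mul_add w
      + X * totalWeightSeries w * hgeom
  linear_combination (1 - 2 * X) * hfactor
    + (1 - X) * partWeightSeries w * one_sub_two_mul_X_mul_compositionSeries R

end GeneratingFunctions

section EvenParts

variable (R : Type*) [CommRing R] (k : ℕ)

/-- The indicator function of `Ev_{>k}`, the even numbers exceeding `k`. -/
def evenGTIndicator (j : ℕ) : R :=
  if Even j ∧ k < j then 1 else 0

lemma coeff_partWeightSeries_evenGTIndicator (n : ℕ) :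
    coeff n (partWeightSeries (evenGTIndicator R k)) = if Even n ∧ k < n then 1 else 0 := by
  cases n with
  | zero => simp [partWeightSeries]
  | succ n => rw [partWeightSeries, coeff_succ_X_mul, coeff_mk, evenGTIndicator]

lemma one_sub_X_sq_mul_partWeightSeries_evenGTIndicator :
    (1 - X ^ 2) * partWeightSeries (evenGTIndicator R k)
      = X ^ (k + if Odd k then 1 else 2) := by
  ext n
  rw [sub_mul, one_mul, map_sub, coeff_X_pow_mul', coeff_X_pow]
  simp only [coeff_partWeightSeries_evenGTIndicator, Nat.odd_iff, Nat.even_iff]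
  split_ifs <;> first | omega | simp

lemma sum_map_evenGTIndicator (l : List ℕ) :
    (l.map (evenGTIndicator R k)).sum = (l.countP fun j => decide (Even j ∧ k < j) : ℕ) := by
  induction l with
  | nil => simp
  | cons a l ih => simp [List.countP_cons, ih, evenGTIndicator, add_comm]

lemma mk_Tk_eq_totalWeightSeries :
    PowerSeries.mk (fun n => (Tk k n : R)) = totalWeightSeries (evenGTIndicator R k) := by
  simp only [totalWeightSeries, sum_map_evenGTIndicator, Tk, Bstat, Nat.cast_sum]

end EvenParts

theorem stmt10 (k : ℕ) (hk : 1 ≤ k) (δ : ℕ) (hδ : δ = if Odd k then 1 else 2) :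
    (1 - 2 * PowerSeries.X) ^ 2 * (1 + PowerSeries.X)
        * PowerSeries.mk (fun n => (Tk k n : ℤ))
      = PowerSeries.X ^ (k + δ) * (1 - PowerSeries.X) ∧
    (1 - 2 * PowerSeries.X) ^ 2 * (1 - PowerSeries.X ^ 2)
        * PowerSeries.mk (fun n => (Tk k n : ℤ))
      = PowerSeries.X ^ (k + δ) * (1 - PowerSeries.X) ^ 2 := by
  rw [mk_Tk_eq_totalWeightSeries, hδ]
  have htotal := one_sub_two_mul_X_sq_mul_totalWeightSeries (evenGTIndicator ℤ k)
  have heven := one_sub_X_sq_mul_partWeightSeries_evenGTIndicator ℤ k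
  constructor
  · linear_combination (1 + X) * htotal + (1 - X) * heven
  · linear_combination (1 - X ^ 2) * htotal + (1 - X) ^ 2 * heven
end

section
/- Let k ≥ 1 be a fixed integer, set δ = 1 if k is odd and δ = 2 if k is even, and let ℓ ≥ 1 be a fixed integer. For n ≥ 0 let L_{k,ℓ}(n) denote the number of compositions m = (m_1, …, m_r) of n with r ≥ ℓ and m_t ∉ Ev_{>k} for all 1 ≤ t ≤ ℓ. Then there exist complex constants A, B_0, …, B_{ℓ−2}, C_0, …, C_{ℓ−1} such that for every n > ℓ·(k + δ − 2) one has L_{k,ℓ}(n) = A·2^n + Σ_{j=0}^{ℓ−2} B_j·binom(n+j, j) + (−1)^n·Σ_{j=0}^{ℓ−1} C_j·binom(n+j, j) (where the first sum is empty if ℓ = 1). -/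
/-- `Lcount k ℓ n` is the number of compositions of `n` with at least `ℓ` parts
whose first `ℓ` parts are not even integers greater than `k`. -/
def Lcount (k ℓ n : ℕ) : ℕ :=
  (Finset.univ.filter fun m : Composition n =>
    ℓ ≤ m.blocks.length ∧
      ∀ t < ℓ, ¬(Even (m.blocks.getD t 0) ∧ k < m.blocks.getD t 0)).card

/-!
Splitting off the first part of a composition shows that the generating function of `Lcount k ℓ` is
`f ^ ℓ * (1 - X) / (1 - 2 X)`, where `f` enumerates the admissible parts and `(1 - X) / (1 - 2 X)`
enumerates all compositions. Since `f = (X + X ^ 2 - X ^ (2 ⌊k / 2⌋ + 2)) / (1 - X ^ 2)`, this is a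
rational function with poles of order at most `1`, `ℓ - 1` and `ℓ` at `1 / 2`, `1` and `-1`, whose
numerator has degree at most `2 ℓ ⌊k / 2⌋ = ℓ (k + δ - 2)` above that of its denominator. Its
partial fraction expansion is the claimed formula; the polynomial part affects only
`n ≤ ℓ (k + δ - 2)`.
-/

open Finset PowerSeries

section PartialFractions

theorem eq_add_sum_mul_pow_of_mul_prod_pow_eq {R ι : Type*} [CommRing R] [Fintype ι]
    [DecidableEq ι] {g G : ι → R} (hG : ∀ i, G i * g i = 1) {e : ι → ℕ} {x q : R}
    {c : (i : ι) → Fin (e i) → R}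
    (hx : x * ∏ i, g i ^ e i =
      q * ∏ i, g i ^ e i + ∑ i, ∑ j, c i j * g i ^ (j : ℕ) * ∏ k ∈ univ.erase i, g k ^ e k) :
    x = q + ∑ i, ∑ j, c i (Fin.rev j) * G i ^ ((j : ℕ) + 1) := by
  have hunit : IsUnit (∏ i, g i ^ e i) := by
    refine IsUnit.of_mul_eq_one_right (∏ i, G i ^ e i) ?_
    simp only [← prod_mul_distrib, ← mul_pow, hG, one_pow, prod_const_one]
  refine hunit.mul_right_cancel ?_
  rw [hx, add_mul, sum_mul]
  congr 1
  refine sum_congr rfl fun i _ => ?_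
  rw [sum_mul, ← Equiv.sum_comp Fin.revPerm]
  refine sum_congr rfl fun j _ => ?_
  have hpow : G i ^ ((j : ℕ) + 1) * g i ^ e i = g i ^ (Fin.rev j : ℕ) := by
    have he : e i = ((j : ℕ) + 1) + (Fin.rev j : ℕ) := by rw [Fin.val_rev]; omega
    rw [congrArg (g i ^ ·) he, pow_add _ ((j : ℕ) + 1), ← mul_assoc, ← mul_pow, hG, one_pow,
      one_mul]
  rw [Fin.revPerm_apply, ← mul_prod_erase univ _ (mem_univ i), ← hpow]
  ring

/-- The geometric series `-a / (1 - a X)`, which is `(X - a⁻¹)⁻¹` when `a ≠ 0`. Partial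
fractions are taken with respect to the monic factors `X - a⁻¹` rather than `1 - a X`. -/
noncomputable def invXSubCInv {R : Type*} [CommRing R] (a : R) : R⟦X⟧ :=
  C (-a) * rescale a (mk 1)

theorem coeff_invXSubCInv_pow_succ {R : Type*} [CommRing R] (a : R) (d n : ℕ) :
    coeff n (invXSubCInv a ^ (d + 1)) = (-a) ^ (d + 1) * (a ^ n * ((n + d).choose d : R)) := by
  rw [invXSubCInv, mul_pow, ← map_pow, ← map_pow, mk_one_pow_eq_mk_choose_add, coeff_C_mul,
    coeff_rescale, coeff_mk, add_comm d n]

variable {K ι : Type*} [Field K] [Fintype ι]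

theorem X_sub_C_inv_eq {a : K} (ha : a ≠ 0) :
    (X - C a⁻¹ : K⟦X⟧) = C (-a⁻¹) * (1 - C a * X) := by
  rw [mul_sub, ← mul_assoc, ← map_mul, neg_mul, inv_mul_cancel₀ ha, map_neg, map_neg, map_one]
  ring

theorem invXSubCInv_mul_X_sub_C_inv {a : K} (ha : a ≠ 0) :
    invXSubCInv a * (X - C a⁻¹) = 1 := by
  have hgeom : rescale a (mk 1) * (1 - C a * X) = 1 := by
    simpa [rescale_X] using congrArg (rescale a) (mk_one_mul_one_sub_eq_one K)
  rw [invXSubCInv, X_sub_C_inv_eq ha, mul_mul_mul_comm, hgeom, ← map_mul, neg_mul_neg,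
    mul_inv_cancel₀ ha, map_one, one_mul]

theorem natDegree_le_of_mul_prod_X_sub_C_pow {R : Type*} [CommRing R] [Nontrivial R] {u : ι → R}
    {e : ι → ℕ} {q : Polynomial R} {N : ℕ}
    (h : (q * ∏ i, (.X - .C (u i)) ^ e i).natDegree ≤ N + ∑ i, e i) : q.natDegree ≤ N := by
  have hmonic : ∀ i ∈ univ, ((.X - .C (u i) : Polynomial R) ^ e i).Monic :=
    fun i _ => (Polynomial.monic_X_sub_C (u i)).pow (e i)
  rcases eq_or_ne q 0 with rfl | hq
  · simp
  rw [mul_comm, (Polynomial.monic_prod_of_monic _ _ hmonic).natDegree_mul' hq,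
    Polynomial.natDegree_prod_of_monic _ _ hmonic, add_comm] at h
  simpa [(Polynomial.monic_X_sub_C _).natDegree_pow] using h

theorem exists_eq_mul_prod_X_sub_C_pow_add_sum [DecidableEq ι] {u : ι → K}
    (hu : Function.Injective u) (e : ι → ℕ) {P : Polynomial K} {N : ℕ}
    (hP : P.natDegree ≤ N + ∑ i, e i) :
    ∃ (q : Polynomial K) (c : (i : ι) → Fin (e i) → K), q.natDegree ≤ N ∧
      P = q * ∏ i, (.X - .C (u i)) ^ e i + ∑ i, ∑ j : Fin (e i),
        .C (c i j) * (.X - .C (u i)) ^ (j : ℕ) * ∏ k ∈ univ.erase i, (.X - .C (u k)) ^ e k := by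
  obtain ⟨q, r, hr, hPqr⟩ := Polynomial.eq_quo_mul_prod_pow_add_sum_rem_mul_prod_pow (s := univ) P
    (fun i _ => Polynomial.monic_X_sub_C (u i))
    (fun i _ j _ hij => Polynomial.pairwise_coprime_X_sub_C hu hij) e
  have hrC : ∀ i j, r i j = .C ((r i j).coeff 0) := fun i j =>
    Polynomial.eq_C_of_degree_le_zero <|
      Nat.WithBot.lt_one_iff_le_zero.mp (by simpa using hr i (mem_univ i) j)
  refine ⟨q, fun i j => (r i j).coeff 0, ?_, by simpa only [← hrC] using hPqr⟩
  have hrem : (∑ i, ∑ j, r i j * (.X - .C (u i)) ^ (j : ℕ) *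
      ∏ k ∈ univ.erase i, (.X - .C (u k)) ^ e k).natDegree ≤ ∑ i, e i := by
    refine Polynomial.natDegree_sum_le_of_forall_le _ _ fun i _ =>
      Polynomial.natDegree_sum_le_of_forall_le _ _ fun j _ => ?_
    rw [hrC, ← add_sum_erase univ e (mem_univ i)]
    refine Polynomial.natDegree_mul_le_of_le ?_ ?_
    · refine (Polynomial.natDegree_C_mul_le _ _).trans ?_
      simp
    · refine (Polynomial.natDegree_prod_le _ _).trans (sum_le_sum fun k _ => ?_)
      simp
  refine natDegree_le_of_mul_prod_X_sub_C_pow (u := u) (e := e) ?_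
  rw [← sub_eq_of_eq_add hPqr]
  exact Polynomial.natDegree_sub_le_of_le hP (hrem.trans (Nat.le_add_left _ _)) |>.trans
    (max_self _).le

theorem exists_coeff_eq_sum_of_mul_prod_eq {a : ι → K} (ha : Function.Injective a)
    (ha0 : ∀ i, a i ≠ 0) {e : ι → ℕ} {F : K⟦X⟧} {P : Polynomial K} {N : ℕ}
    (hP : P.natDegree ≤ N + ∑ i, e i) (hF : F * ∏ i, (1 - C (a i) * X) ^ e i = P) :
    ∃ c : (i : ι) → Fin (e i) → K, ∀ n, N < n →
      coeff n F = ∑ i, a i ^ n * ∑ j, c i j * ((n + (j : ℕ)).choose (j : ℕ) : K) := by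
  classical
  have hprod : ∏ i, (X - C (a i)⁻¹ : K⟦X⟧) ^ e i =
      C (∏ i, (-(a i)⁻¹) ^ e i) * ∏ i, (1 - C (a i) * X) ^ e i := by
    simp only [X_sub_C_inv_eq (ha0 _), mul_pow, prod_mul_distrib, map_prod, map_pow]
  obtain ⟨q, c, hq, hqc⟩ := exists_eq_mul_prod_X_sub_C_pow_add_sum (inv_injective.comp ha) e
    ((Polynomial.natDegree_C_mul_le (∏ i, (-(a i)⁻¹) ^ e i) P).trans hP)
  have hFqc : F = q + ∑ i, ∑ j, C (c i (Fin.rev j)) * invXSubCInv (a i) ^ ((j : ℕ) + 1) := by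
    refine eq_add_sum_mul_pow_of_mul_prod_pow_eq
      (c := fun i j => C (c i j)) (fun i => invXSubCInv_mul_X_sub_C_inv (ha0 i)) ?_
    rw [hprod, mul_left_comm, hF, ← hprod]
    simpa only [map_add, map_sub, map_mul, map_pow, map_sum, map_prod, Function.comp_apply,
      Polynomial.coeToPowerSeries.ringHom_apply, Polynomial.coe_C, Polynomial.coe_X]
      using congrArg Polynomial.coeToPowerSeries.ringHom hqc
  refine ⟨fun i j => c i (Fin.rev j) * (-a i) ^ ((j : ℕ) + 1), fun n hn => ?_⟩
  have hqn : coeff n (q : K⟦X⟧) = 0 := by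
    rw [Polynomial.coeff_coe, Polynomial.coeff_eq_zero_of_natDegree_lt (hq.trans_lt hn)]
  simp only [hFqc, map_add, hqn, zero_add, map_sum, coeff_C_mul, coeff_invXSubCInv_pow_succ,
    mul_sum]
  exact sum_congr rfl fun i _ => sum_congr rfl fun j _ => by ring

end PartialFractions

section Compositions

variable (p : ℕ → Prop) [DecidablePred p]

/-- The block lists of the compositions of `n` with at least `ℓ` parts whose first `ℓ` parts satisfy
`p`. Lists replace compositions so that splitting off the first part involves no dependent types. -/
def prefixLists (ℓ n : ℕ) : Finset (List ℕ) :=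
  (univ.filter fun m : Composition n =>
    ℓ ≤ m.blocks.length ∧ ∀ t < ℓ, p (m.blocks.getD t 0)).map
    ⟨Composition.blocks, fun _ _ => Composition.ext⟩

theorem card_prefixLists_not_even_gt (k ℓ n : ℕ) :
    #(prefixLists (fun m => ¬(Even m ∧ k < m)) ℓ n) = Lcount k ℓ n :=
  card_map _

theorem card_prefixLists_zero (n : ℕ) : #(prefixLists p 0 n) = 2 ^ (n - 1) := by
  simp [prefixLists, composition_card]

variable {p}

theorem mem_prefixLists {ℓ n : ℕ} {l : List ℕ} :
    l ∈ prefixLists p ℓ n ↔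
      ((∀ a ∈ l, 0 < a) ∧ l.sum = n) ∧ ℓ ≤ l.length ∧ ∀ t < ℓ, p (l.getD t 0) := by
  simp only [prefixLists, mem_map, mem_filter, mem_univ, true_and]
  constructor
  · rintro ⟨m, hm, rfl⟩
    exact ⟨⟨fun _ => m.blocks_pos, m.blocks_sum⟩, hm⟩
  · rintro ⟨⟨hpos, hsum⟩, hl⟩
    exact ⟨⟨l, hpos _, hsum⟩, hl, rfl⟩

theorem cons_mem_prefixLists_succ {ℓ n a : ℕ} {l : List ℕ} :
    a :: l ∈ prefixLists p (ℓ + 1) n ↔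
      (0 < a ∧ p a) ∧ a + l.sum = n ∧ l ∈ prefixLists p ℓ l.sum := by
  simp only [mem_prefixLists, List.forall_mem_cons, List.sum_cons, List.length_cons,
    Nat.forall_lt_succ_left, List.getD_cons_zero, List.getD_cons_succ, Nat.add_le_add_iff_right]
  tauto

variable (p)

theorem prefixLists_succ (ℓ n : ℕ) :
    prefixLists p (ℓ + 1) n =
      ((antidiagonal n).filter fun ab => 0 < ab.1 ∧ p ab.1).biUnion fun ab =>
        (prefixLists p ℓ ab.2).map ⟨List.cons ab.1, List.cons_injective⟩ := by
  ext l
  cases l with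
  | nil => simp [mem_prefixLists]
  | cons a l =>
    rw [cons_mem_prefixLists_succ]
    simp only [mem_biUnion, mem_filter, HasAntidiagonal.mem_antidiagonal, mem_map,
      Function.Embedding.coeFn_mk, List.cons.injEq, Prod.exists]
    constructor
    · rintro ⟨ha, hsum, hl⟩
      exact ⟨a, l.sum, ⟨hsum, ha⟩, l, hl, rfl, rfl⟩
    · rintro ⟨a, b, ⟨hsum, ha⟩, l, hl, rfl, rfl⟩
      obtain rfl : l.sum = b := (mem_prefixLists.mp hl).1.2
      exact ⟨ha, hsum, hl⟩

theorem card_prefixLists_succ (ℓ n : ℕ) :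
    #(prefixLists p (ℓ + 1) n) =
      ∑ ab ∈ antidiagonal n with 0 < ab.1 ∧ p ab.1, #(prefixLists p ℓ ab.2) := by
  rw [prefixLists_succ, card_biUnion]
  · simp only [card_map]
  · intro ab hab ab' hab' hne
    simp only [mem_coe, mem_filter, HasAntidiagonal.mem_antidiagonal] at hab hab'
    have hfst : ab.1 ≠ ab'.1 := fun h => hne (Prod.ext h (by omega))
    rw [Function.onFun, Finset.disjoint_left]
    simp only [mem_map, Function.Embedding.coeFn_mk]
    rintro _ ⟨l, -, rfl⟩ ⟨l', -, h⟩
    exact hfst (List.cons.inj h).1.symm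

end Compositions

section GeneratingFunctions

variable (R : Type*) [CommRing R] (p : ℕ → Prop) [DecidablePred p]

/-- The generating function of the positive integers satisfying `p`. -/
def partSeries : R⟦X⟧ :=
  mk fun n => if 0 < n ∧ p n then 1 else 0

/-- The generating function in `n` of the number of compositions of `n` with at least `ℓ` parts
whose first `ℓ` parts satisfy `p`. -/
def prefixSeries (ℓ : ℕ) : R⟦X⟧ :=
  mk fun n => (#(prefixLists p ℓ n) : R)

theorem coeff_prefixSeries_not_even_gt (k ℓ n : ℕ) :
    coeff n (prefixSeries R (fun m => ¬(Even m ∧ k < m)) ℓ) = (Lcount k ℓ n : R) := by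
  rw [prefixSeries, coeff_mk, card_prefixLists_not_even_gt]

theorem prefixSeries_zero_mul_one_sub_two_mul_X :
    prefixSeries R p 0 * (1 - C 2 * X) = 1 - X := by
  rw [mul_sub, mul_one, mul_left_comm]
  ext n
  rcases n with _ | _ | n
  · simp [prefixSeries, card_prefixLists_zero]
  · norm_num [prefixSeries, card_prefixLists_zero, coeff_succ_mul_X, coeff_one]
  · simp [prefixSeries, card_prefixLists_zero, coeff_succ_mul_X, coeff_one, coeff_X, pow_succ']

theorem prefixSeries_succ (ℓ : ℕ) :
    prefixSeries R p (ℓ + 1) = partSeries R p * prefixSeries R p ℓ := by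
  ext n
  simp [prefixSeries, partSeries, coeff_mul, card_prefixLists_succ, sum_filter]

theorem prefixSeries_eq_partSeries_pow_mul (ℓ : ℕ) :
    prefixSeries R p ℓ = partSeries R p ^ ℓ * prefixSeries R p 0 := by
  induction ℓ with
  | zero => rw [pow_zero, one_mul]
  | succ ℓ ih => rw [prefixSeries_succ, ih, pow_succ', mul_assoc]

variable {p} in
theorem prefixSeries_mul_of_partSeries_mul_eq {D Q : R⟦X⟧} (h : partSeries R p * D = Q) (ℓ : ℕ) :
    prefixSeries R p ℓ * (D ^ ℓ * (1 - C 2 * X)) = Q ^ ℓ * (1 - X) := by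
  rw [prefixSeries_eq_partSeries_pow_mul, mul_mul_mul_comm, ← mul_pow, h,
    prefixSeries_zero_mul_one_sub_two_mul_X]

theorem partSeries_not_even_gt_mul_one_sub_X_sq (k : ℕ) :
    partSeries R (fun m => ¬(Even m ∧ k < m)) * (1 - X ^ 2) =
      X + X ^ 2 - X ^ (2 * (k / 2) + 2) := by
  rw [mul_sub, mul_one]
  ext n
  rw [map_sub, coeff_mul_X_pow', map_sub, map_add, coeff_X, coeff_X_pow, coeff_X_pow]
  simp only [partSeries, coeff_mk, Nat.even_iff]
  rcases n with _ | _ | n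
  · simp
  · simp
  · simp only [Nat.le_add_left, if_true]
    split_ifs <;> first | omega | simp

theorem prefixSeries_not_even_gt_mul {ℓ : ℕ} (hℓ : 1 ≤ ℓ) (k : ℕ) :
    prefixSeries R (fun m => ¬(Even m ∧ k < m)) ℓ *
        ((1 - C 2 * X) * (1 - X) ^ (ℓ - 1) * (1 + X) ^ ℓ) =
      (X + X ^ 2 - X ^ (2 * (k / 2) + 2)) ^ ℓ := by
  have hunit : IsUnit (1 - X : R⟦X⟧) := .of_mul_eq_one_right _ (mk_one_mul_one_sub_eq_one R)
  refine hunit.mul_right_cancel ?_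
  have hsq : (1 - X ^ 2 : R⟦X⟧) ^ ℓ = (1 - X) ^ (ℓ - 1) * (1 - X) * (1 + X) ^ ℓ := by
    rw [← pow_succ, Nat.sub_add_cancel hℓ, ← mul_pow]
    ring
  rw [← prefixSeries_mul_of_partSeries_mul_eq R
    (partSeries_not_even_gt_mul_one_sub_X_sq R k), hsq]
  ring

end GeneratingFunctions

theorem natDegree_X_add_X_sq_sub_X_pow_pow_le (R : Type*) [Ring R] (h ℓ : ℕ) :
    ((.X + .X ^ 2 - .X ^ (h + 2) : Polynomial R) ^ ℓ).natDegree ≤ ℓ * h + 2 * ℓ := by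
  have hbase : (.X + .X ^ 2 - .X ^ (h + 2) : Polynomial R).natDegree ≤ h + 2 := by
    compute_degree
  exact (Polynomial.natDegree_pow_le_of_le ℓ hbase).trans_eq (by ring)

section Poles

variable {K : Type*} [Field K]

theorem injective_two_one_neg_one (h2 : (2 : K) ≠ 0) (h3 : (3 : K) ≠ 0) :
    Function.Injective ![(2 : K), 1, -1] := by
  have h21 : (2 : K) ≠ 1 := fun h => one_ne_zero (α := K) (by linear_combination h)
  have h2neg : (2 : K) ≠ -1 := fun h => h3 (by linear_combination h)
  have h1neg : (1 : K) ≠ -1 := fun h => h2 (by linear_combination h)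
  intro i j
  fin_cases i <;> fin_cases j <;> simp [h21, h2neg, h1neg, h21.symm, h2neg.symm, h1neg.symm]

theorem exists_coeff_eq_of_mul_eq_of_poles (h2 : (2 : K) ≠ 0) (h3 : (3 : K) ≠ 0)
    {F : K⟦X⟧} {P : Polynomial K} {N b c : ℕ} (hP : P.natDegree ≤ N + (1 + b + c))
    (hF : F * ((1 - C 2 * X) * (1 - X) ^ b * (1 + X) ^ c) = (P : K⟦X⟧)) :
    ∃ (A : K) (B : Fin b → K) (C : Fin c → K), ∀ n, N < n →
      coeff n F = A * 2 ^ n + (∑ j, B j * ((n + (j : ℕ)).choose (j : ℕ) : K))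
        + (-1) ^ n * ∑ j, C j * ((n + (j : ℕ)).choose (j : ℕ) : K) := by
  have hne : ∀ i, ![(2 : K), 1, -1] i ≠ 0 := by simp [Fin.forall_fin_succ, h2]
  obtain ⟨coeffs, hcoeffs⟩ := exists_coeff_eq_sum_of_mul_prod_eq (e := ![1, b, c])
    (injective_two_one_neg_one h2 h3) hne (by simpa [Fin.sum_univ_three] using hP)
    (by simpa [Fin.prod_univ_three] using hF)
  obtain ⟨A, B, C, hABC⟩ : ∃ (A : Fin 1 → K) (B : Fin b → K) (C : Fin c → K), ∀ n, N < n →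
      coeff n F = 2 ^ n * ∑ j, A j * ((n + (j : ℕ)).choose (j : ℕ) : K)
        + 1 ^ n * ∑ j, B j * ((n + (j : ℕ)).choose (j : ℕ) : K)
        + (-1) ^ n * ∑ j, C j * ((n + (j : ℕ)).choose (j : ℕ) : K) :=
    ⟨coeffs 0, coeffs 1, coeffs 2, fun n hn => (hcoeffs n hn).trans (Fin.sum_univ_three _)⟩
  exact ⟨A 0, B, C, fun n hn => by simp [hABC n hn, mul_comm (A 0)]⟩

end Poles

theorem stmt15_general {K : Type*} [Field K] (h2 : (2 : K) ≠ 0) (h3 : (3 : K) ≠ 0)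
    (k : ℕ) (δ : ℕ) (hδ : δ = if Odd k then 1 else 2) (ℓ : ℕ) (hℓ : 1 ≤ ℓ) :
    ∃ A : K, ∃ B : Fin (ℓ - 1) → K, ∃ C : Fin ℓ → K,
      ∀ n : ℕ, ℓ * (k + δ - 2) < n →
        (Lcount k ℓ n : K) =
          A * 2 ^ n
            + (∑ j : Fin (ℓ - 1), B j * ((n + (j : ℕ)).choose (j : ℕ) : K))
            + (-1) ^ n * ∑ j : Fin ℓ, C j * ((n + (j : ℕ)).choose (j : ℕ) : K) := by
  have hkδ : k + δ - 2 = 2 * (k / 2) := by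
    simp only [Nat.odd_iff] at hδ
    split_ifs at hδ <;> omega
  have hdeg : ((.X + .X ^ 2 - .X ^ (2 * (k / 2) + 2) : Polynomial K) ^ ℓ).natDegree ≤
      ℓ * (k + δ - 2) + (1 + (ℓ - 1) + ℓ) := by
    refine (natDegree_X_add_X_sq_sub_X_pow_pow_le K _ ℓ).trans_eq ?_
    rw [hkδ]
    omega
  obtain ⟨A, B, C, hABC⟩ := exists_coeff_eq_of_mul_eq_of_poles h2 h3
    (F := prefixSeries K (fun m => ¬(Even m ∧ k < m)) ℓ) hdeg
    (by simpa using prefixSeries_not_even_gt_mul K hℓ k)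
  exact ⟨A, B, C, fun n hn => coeff_prefixSeries_not_even_gt K k ℓ n ▸ hABC n hn⟩

theorem stmt15 (k : ℕ) (hk : 1 ≤ k) (δ : ℕ) (hδ : δ = if Odd k then 1 else 2)
    (ℓ : ℕ) (hℓ : 1 ≤ ℓ) :
    ∃ A : ℂ, ∃ B : Fin (ℓ - 1) → ℂ, ∃ C : Fin ℓ → ℂ,
      ∀ n : ℕ, ℓ * (k + δ - 2) < n →
        (Lcount k ℓ n : ℂ) =
          A * 2 ^ n
            + (∑ j : Fin (ℓ - 1), B j * ((n + (j : ℕ)).choose (j : ℕ) : ℂ))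
            + (-1) ^ n * ∑ j : Fin ℓ, C j * ((n + (j : ℕ)).choose (j : ℕ) : ℂ) :=
  stmt15_general two_ne_zero three_ne_zero k δ hδ ℓ hℓ
end
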